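/- Let M be a path-connected topological space with basepoint ∗, let f : M → M be continuous, let k ≥ 1, and fix a path α in M from ∗ to f(∗). Let π = π₁(M, ∗) be the fundamental group, and define the endomorphism ρ : π → π by ρ([γ]) = [α · (f ∘ γ) · α⁻¹] (conjugate the f-image of a loop back to the basepoint along α). Let hoP_k(f) be the subspace of (C([0,1], M))^k consisting of tuples λ with f(λ_{i+1}(0)) = λ_i(1) for all i (indices mod k). Then the set of path components of hoP_k(f) is in bijection with the quotient of π by the equivalence relation y ∼ g · y · (ρ^k(g))⁻¹ (g ∈ π), i.e. with the set of ρ^k-twisted conjugacy classes of π, where ρ^k is the k-th iterate of ρ. -/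

import Mathlib

open unitInterval

/-- The homotopy `k`-periodic point space of `f : M → M`: the subspace of
`(C(I, M))^k` of tuples `λ` with `f (λ_{i+1}(0)) = λ_i(1)` (indices mod `k`). -/
def hoP {M : Type*} [TopologicalSpace M] (f : M → M) (k : ℕ) [NeZero k] :
    Set (Fin k → C(I, M)) :=
  {lam | ∀ i : Fin k, f ((lam (i + 1)) 0) = (lam i) 1}

attribute [local instance] Path.Homotopic.setoid

/-!
Dragging base points along paths to `∗` joins every point of `hoP_k(f)` to a tuple of paths `L_i`
from `∗` to `f(∗)`. A path of `hoP_k(f)` between two such tuples `L` and `L'` is, up to homotopy, a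
tuple of loops `c_i` with `L_i · f(c_{i+1}) ≃ c_i · L'_i`. Comparing `L_i` and `L'_i` with `α`
turns these relations into twisted conjugacy in `π ^ k` with respect to `(h_i) ↦ (ρ(h_{i+1}))`.
Finally the product `A_0 ρ(A_1) ⋯ ρ^{k-1}(A_{k-1})` telescopes under this twisted conjugation,
and so reduces it to `ρ^k`-twisted conjugacy in `π`.
-/

section TwistedConjugacy

section Monoid

variable {G : Type*} [Monoid G]

/-- The endomorphism `(h_i)_i ↦ (ρ (h_{i+1}))_i` of `G ^ k`, indices taken mod `k`.
Twisted conjugacy with respect to it classifies the path components of `hoP f k`. -/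
def cyclicShift (ρ : Monoid.End G) (k : ℕ) [NeZero k] : Monoid.End (Fin k → G) :=
  MonoidHom.pi fun i => ρ.comp (Pi.evalMonoidHom _ (i + 1))

/-- The product `A_0 * ρ (A_1) * ⋯ * ρ ^ (n - 1) (A_{n-1})`, in Horner form. It turns twisted
conjugacy for `cyclicShift ρ n` into twisted conjugacy for `ρ ^ n`. -/
def twistedProd (ρ : Monoid.End G) : {n : ℕ} → (Fin n → G) → G
  | 0, _ => 1
  | _ + 1, A => A 0 * ρ (twistedProd ρ (Fin.tail A))

theorem twistedProd_one (ρ : Monoid.End G) (n : ℕ) : twistedProd ρ (1 : Fin n → G) = 1 := by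
  induction n with
  | zero => rfl
  | succ n ih =>
    have htail : Fin.tail (1 : Fin (n + 1) → G) = 1 := rfl
    simp [twistedProd, htail, ih]

theorem twistedProd_surjective (ρ : Monoid.End G) (k : ℕ) [NeZero k] :
    Function.Surjective (twistedProd ρ : (Fin k → G) → G) := by
  obtain ⟨n, rfl⟩ := Nat.exists_eq_succ_of_ne_zero (NeZero.ne k)
  exact fun y => ⟨Fin.cons y (1 : Fin n → G), by simp [twistedProd, twistedProd_one]⟩

end Monoid

variable {G : Type*} [Group G]

/-- Twisted conjugacy with respect to an endomorphism `φ`: the orbit relation of the action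
`g • y = g * y * (φ g)⁻¹` of `G` on itself. -/
def twistedConj (φ : Monoid.End G) : Setoid G where
  r y z := ∃ g, z = g * y * (φ g)⁻¹
  iseqv :=
    { refl := fun y => ⟨1, by simp⟩
      symm := by
        rintro y _ ⟨g, rfl⟩
        exact ⟨g⁻¹, by simp [mul_assoc]⟩
      trans := by
        rintro y _ _ ⟨g, rfl⟩ ⟨h, rfl⟩
        exact ⟨h * g, by simp [mul_assoc]⟩ }

theorem twistedProd_eq_of_forall_eq (ρ : Monoid.End G) {n : ℕ} {A B : Fin n → G}
    (h : Fin (n + 1) → G) (hAB : ∀ i, B i = h i.castSucc * A i * (ρ (h i.succ))⁻¹) :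
    twistedProd ρ B = h 0 * twistedProd ρ A * ((ρ ^ n) (h (Fin.last n)))⁻¹ := by
  induction n with
  | zero => simp [twistedProd]
  | succ n ih =>
    have htail := ih (A := Fin.tail A) (B := Fin.tail B) (Fin.tail h) fun i => hAB i.succ
    simp only [twistedProd, htail, hAB 0]
    simp [Fin.tail, pow_succ', mul_assoc]

-- Since `ρ` need not be injective, `h` can only be computed downwards from its last entry.
theorem exists_forall_eq_mul_mul_inv (ρ : Monoid.End G) {n : ℕ} (A B : Fin n → G) (g : G) :
    ∃ h : Fin (n + 1) → G,
      h (Fin.last n) = g ∧ ∀ i, B i = h i.castSucc * A i * (ρ (h i.succ))⁻¹ := by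
  induction n with
  | zero => exact ⟨fun _ => g, rfl, fun i => i.elim0⟩
  | succ n ih =>
    obtain ⟨h, hlast, hstep⟩ := ih (Fin.tail A) (Fin.tail B)
    refine ⟨Fin.cons (B 0 * ρ (h 0) * (A 0)⁻¹) h, ?_, Fin.cases ?_ fun i => ?_⟩
    · simpa [← Fin.succ_last] using hlast
    · simp
    · simpa [Fin.tail, ← Fin.succ_castSucc] using hstep i

theorem apply_succ_eq_apply_castSucc_add_one {α : Type*} {n : ℕ} (h : Fin (n + 2) → α)
    (hlast : h (Fin.last (n + 1)) = h 0) (i : Fin (n + 1)) :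
    h i.succ = h (i + 1).castSucc := by
  induction i using Fin.lastCases with
  | last => simpa using hlast
  | cast i => simp

theorem twistedConj_cyclicShift_iff (ρ : Monoid.End G) {k : ℕ} [NeZero k] (A B : Fin k → G) :
    twistedConj (cyclicShift ρ k) A B ↔
      twistedConj (ρ ^ k) (twistedProd ρ A) (twistedProd ρ B) := by
  obtain ⟨n, rfl⟩ := Nat.exists_eq_succ_of_ne_zero (NeZero.ne k)
  constructor
  · rintro ⟨h, rfl⟩
    let h' : Fin (n + 2) → G := Fin.snoc h (h 0)
    have hlast : h' (Fin.last (n + 1)) = h 0 := Fin.snoc_last ..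
    have hinit (i : Fin (n + 1)) : h' i.castSucc = h i := Fin.snoc_castSucc ..
    have hzero : h' 0 = h 0 := hinit 0
    refine ⟨h 0, ?_⟩
    rw [twistedProd_eq_of_forall_eq ρ (A := A) h', hlast, hzero]
    intro i
    rw [apply_succ_eq_apply_castSucc_add_one h' (hlast.trans hzero.symm), hinit, hinit]
    rfl
  · rintro ⟨g, hg⟩
    obtain ⟨h, hlast, hstep⟩ := exists_forall_eq_mul_mul_inv ρ A B g
    have hzero : h 0 = g := by
      have htelescope := twistedProd_eq_of_forall_eq ρ h hstep
      rw [hg, hlast] at htelescope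
      exact (mul_right_cancel (mul_right_cancel htelescope)).symm
    refine ⟨fun i => h i.castSucc, funext fun i => ?_⟩
    rw [hstep i, apply_succ_eq_apply_castSucc_add_one h (hlast.trans hzero.symm)]
    rfl

end TwistedConjugacy

open CategoryTheory in
theorem comp_map_eq_comp_iff {C : Type*} [Groupoid C] (F : C ⥤ C) {b : C} (a l l' : b ⟶ F.obj b)
    (c c' : b ⟶ b) :
    l ≫ F.map c' = c ≫ l' ↔
      End.of (a ≫ Groupoid.inv l') = End.of c * End.of (a ≫ Groupoid.inv l) *
        (End.of (a ≫ F.map c' ≫ Groupoid.inv a))⁻¹ := by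
  rw [eq_mul_inv_iff_mul_eq, End.mul_def, End.mul_def]
  change _ ↔ (_ : b ⟶ b) = _
  simp only [Groupoid.inv_eq_inv, Category.assoc, IsIso.inv_hom_id_assoc, cancel_epi]
  rw [IsIso.eq_inv_comp, ← Category.assoc, IsIso.comp_inv_eq]

section DiffLoop

variable {M : Type*} [TopologicalSpace M]

/-- The class of the loop which follows `α` and returns along `p`. Since products in
`FundamentalGroup` are taken in the order of composition of endomorphisms, it is this loop rather
than its inverse that makes homotopic squares correspond to twisted conjugacy. -/
noncomputable def diffLoop {a b : M} (α p : Path a b) : FundamentalGroup M a :=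
  FundamentalGroup.fromPath (.mk (α.trans p.symm))

theorem diffLoop_surjective {a b : M} (α : Path a b) : Function.Surjective (diffLoop α) := by
  intro g
  obtain ⟨γ, rfl⟩ := Path.Homotopic.Quotient.mk_surjective g
  refine ⟨γ.symm.trans α, ?_⟩
  change Path.Homotopic.Quotient.mk _ = _
  simp [← Path.Homotopic.Quotient.trans_assoc]

theorem homotopic_square_iff_diffLoop {b : M} {f : M → M} (hf : Continuous f)
    (α p p' : Path b (f b)) (c c' : Path b b) :
    (p.trans (c'.map hf)).Homotopic (c.trans p') ↔
      diffLoop α p' = FundamentalGroup.fromPath (.mk c) * diffLoop α p *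
        (FundamentalGroup.fromPath (.mk ((α.trans (c'.map hf)).trans α.symm)))⁻¹ := by
  rw [← Path.Homotopic.Quotient.eq, Path.Homotopic.Quotient.mk_trans (α.trans _),
    Path.Homotopic.Quotient.mk_trans α, Path.Homotopic.Quotient.trans_assoc]
  exact comp_map_eq_comp_iff (FundamentalGroupoid.map ⟨f, hf⟩) (.mk α) (.mk p) (.mk p')
    (.mk c) (.mk c')

end DiffLoop

/-- The part of `c` up to time `s`, reparametrized to the unit interval. -/
def initialSegment {M : Type*} [TopologicalSpace M] {a b : M} (c : Path a b) (s : I) :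
    Path a (c s) :=
  (c.subpath 0 s).cast c.source.symm rfl

theorem continuous_initialSegment {M : Type*} [TopologicalSpace M] {a b : M} (c : Path a b) :
    Continuous ↿(initialSegment c) :=
  c.continuous.comp (by
    change Continuous fun p : I × I => Set.Icc.convexComb 0 p.1 p.2
    fun_prop)

namespace hoP

variable {M : Type*} [TopologicalSpace M] {f : M → M} {k : ℕ} [NeZero k] {x y : Fin k → M}

/-- The point of `hoP f k` given by paths whose endpoints satisfy the constraints. -/
def ofPaths (L : ∀ i, Path (x i) (f (x (i + 1)))) : hoP f k :=
  ⟨fun i => (L i).toContinuousMap, fun i => by simp⟩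

theorem joined_ofPaths_of_homotopic {L L' : ∀ i, Path (x i) (f (x (i + 1)))}
    (h : ∀ i, (L i).Homotopic (L' i)) : Joined (ofPaths L) (ofPaths L') := by
  let H (i : Fin k) : (L i).Homotopy (L' i) := (h i).some
  refine ⟨⟨⟨fun s => ofPaths fun i => (H i).eval s, ?_⟩, by simp, by simp⟩⟩
  exact Continuous.subtype_mk (continuous_pi fun i => (H i).curry.continuous) _

/-- The point obtained from `ofPaths L` by dragging its base points along the paths `c i` up to
time `s`. -/
noncomputable def drag (hf : Continuous f) (L : ∀ i, Path (x i) (f (x (i + 1))))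
    (c : ∀ i, Path (x i) (y i)) (s : I) : hoP f k :=
  ofPaths fun i => (initialSegment (c i) s).symm.trans
    ((L i).trans ((initialSegment (c (i + 1)) s).map hf))

theorem continuous_drag (hf : Continuous f) (L : ∀ i, Path (x i) (f (x (i + 1))))
    (c : ∀ i, Path (x i) (y i)) : Continuous (drag hf L c) := by
  refine Continuous.subtype_mk (continuous_pi fun i => ?_) _
  have hmid : Continuous ↿fun _ : I => L i := (L i).continuous.comp continuous_snd
  have hend : Continuous ↿fun s => (initialSegment (c (i + 1)) s).map hf :=
    hf.comp (continuous_initialSegment _)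
  exact (ContinuousMap.curry ⟨_, Path.trans_continuous_family _
    (Path.symm_continuous_family _ (continuous_initialSegment (c i))) _
    (Path.trans_continuous_family _ hmid _ hend)⟩).continuous

theorem drag_zero (hf : Continuous f) (L : ∀ i, Path (x i) (f (x (i + 1))))
    (c : ∀ i, Path (x i) (y i)) :
    drag hf L c 0 = ofPaths fun i =>
      (Path.refl (x i)).symm.trans ((L i).trans (Path.refl (f (x (i + 1))))) := by
  ext i t
  simp [drag, ofPaths, initialSegment, Path.trans_apply]

theorem drag_one (hf : Continuous f) (L : ∀ i, Path (x i) (f (x (i + 1))))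
    (c : ∀ i, Path (x i) (y i)) :
    drag hf L c 1 = ofPaths fun i => (c i).symm.trans ((L i).trans ((c (i + 1)).map hf)) := by
  ext i t
  simp [drag, ofPaths, initialSegment, Path.trans_apply]

theorem joined_ofPaths_conj (hf : Continuous f) (L : ∀ i, Path (x i) (f (x (i + 1))))
    (c : ∀ i, Path (x i) (y i)) :
    Joined (ofPaths L)
      (ofPaths fun i => (c i).symm.trans ((L i).trans ((c (i + 1)).map hf))) := by
  have hdrag : Joined (drag hf L c 0) (drag hf L c 1) :=
    ⟨⟨⟨drag hf L c, continuous_drag hf L c⟩, rfl, rfl⟩⟩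
  rw [drag_zero, drag_one] at hdrag
  refine (joined_ofPaths_of_homotopic fun i => ?_).trans hdrag
  rw [← Path.Homotopic.Quotient.eq]
  simp [Path.Homotopic.Quotient.mk_trans]

theorem exists_homotopic_square_of_joined (hf : Continuous f)
    {L : ∀ i, Path (x i) (f (x (i + 1)))} {L' : ∀ i, Path (y i) (f (y (i + 1)))}
    (h : Joined (ofPaths L) (ofPaths L')) :
    ∃ c : ∀ i, Path (x i) (y i),
      ∀ i, ((L i).trans ((c (i + 1)).map hf)).Homotopic ((c i).trans (L' i)) := by
  obtain ⟨P⟩ := h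
  have hP (i : Fin k) : Continuous fun s => (P s).1 i :=
    (continuous_apply i).comp (continuous_subtype_val.comp P.continuous)
  let H (i : Fin k) : (L i).toContinuousMap.Homotopy (L' i).toContinuousMap :=
    { toFun p := (P p.1).1 i p.2
      continuous_toFun := ContinuousMap.continuous_uncurry_of_continuous ⟨_, hP i⟩
      map_zero_left t := by rw [P.source]; rfl
      map_one_left t := by rw [P.target]; rfl }
  have hedge (i : Fin k) (t : I) : f ((H (i + 1)).evalAt 0 t) = (H i).evalAt 1 t := (P t).2 i
  refine ⟨fun i => ((H i).evalAt 0).cast (L i).source.symm (L' i).source.symm, fun i => ?_⟩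
  convert (Path.Homotopic.map_trans_evalAt (H i) Path.id).pathCast
    (L i).source.symm (L' i).target.symm using 1
  · ext t
    simp [Path.trans_apply, hedge]
  · ext t
    simp [Path.trans_apply]

theorem joined_ofPaths_iff (hf : Continuous f)
    {L : ∀ i, Path (x i) (f (x (i + 1)))} {L' : ∀ i, Path (y i) (f (y (i + 1)))} :
    Joined (ofPaths L) (ofPaths L') ↔ ∃ c : ∀ i, Path (x i) (y i),
      ∀ i, ((L i).trans ((c (i + 1)).map hf)).Homotopic ((c i).trans (L' i)) := by
  refine ⟨exists_homotopic_square_of_joined hf, ?_⟩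
  rintro ⟨c, hc⟩
  refine (joined_ofPaths_conj hf L c).trans (joined_ofPaths_of_homotopic fun i => ?_)
  rw [← Path.Homotopic.Quotient.eq, Path.Homotopic.Quotient.mk_trans,
    Path.Homotopic.Quotient.eq.2 (hc i)]
  simp [← Path.Homotopic.Quotient.trans_assoc]

theorem exists_joined_ofPaths [PathConnectedSpace M] (hf : Continuous f) (b : M) (lam : hoP f k) :
    ∃ L : Fin k → Path b (f b), Joined lam (ofPaths L) := by
  let L (i : Fin k) : Path (lam.1 i 0) (f (lam.1 (i + 1) 0)) := ⟨lam.1 i, rfl, (lam.2 i).symm⟩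
  exact ⟨_, joined_ofPaths_conj hf L fun i => PathConnectedSpace.somePath (lam.1 i 0) b⟩

theorem joined_ofPaths_iff_twistedConj (hf : Continuous f) {b : M} (α : Path b (f b))
    (ρ : FundamentalGroup M b →* FundamentalGroup M b)
    (hρ : ∀ γ : Path b b, ρ (FundamentalGroup.fromPath (.mk γ)) =
      FundamentalGroup.fromPath (.mk ((α.trans (γ.map hf)).trans α.symm)))
    (L L' : Fin k → Path b (f b)) :
    Joined (ofPaths L) (ofPaths L') ↔
      twistedConj (cyclicShift ρ k) (fun i => diffLoop α (L i)) (fun i => diffLoop α (L' i)) := by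
  rw [joined_ofPaths_iff hf]
  simp only [homotopic_square_iff_diffLoop hf α, ← hρ]
  constructor
  · rintro ⟨c, hc⟩
    exact ⟨fun i => FundamentalGroup.fromPath (.mk (c i)), funext hc⟩
  · rintro ⟨h, hh⟩
    choose c hc using fun i => Path.Homotopic.Quotient.mk_surjective (h i)
    obtain rfl : (fun i => .mk (c i)) = h := funext hc
    exact ⟨c, congrFun hh⟩

end hoP

theorem nonempty_equiv_of_surjective_of_eq_iff_eq {α β γ : Type*} {p : α → β} {q : α → γ}
    (hp : Function.Surjective p) (hq : Function.Surjective q)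
    (h : ∀ a a', p a = p a' ↔ q a = q a') : Nonempty (β ≃ γ) :=
  ⟨(Setoid.quotientKerEquivOfSurjective p hp).symm.trans <|
    (Quotient.congrRight h).trans (Setoid.quotientKerEquivOfSurjective q hq)⟩

/-- The set of path components of `hoP_k(f)` is in bijection with the set of
`ρ^k`-twisted conjugacy classes of `π = π₁(M, ∗)`, where
`ρ([γ]) = [α · (f ∘ γ) · α⁻¹]`. -/
theorem hoP_pathComponents_equiv_twisted_conjugacy_classes
    {M : Type u} [TopologicalSpace M] [PathConnectedSpace M] (star : M)
    (f : M → M) (hf : Continuous f) (k : ℕ) [NeZero k]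
    (α : Path star (f star))
    (ρ : FundamentalGroup M star →* FundamentalGroup M star)
    (hρ : ∀ γ : Path star star,
      ρ (FundamentalGroup.fromPath (X := TopCat.of M) ⟦γ⟧) =
        FundamentalGroup.fromPath (X := TopCat.of M)
          ⟦(α.trans (γ.map hf)).trans α.symm⟧) :
    Nonempty
      (ZerothHomotopy (hoP f k) ≃
        Quot (fun y z : FundamentalGroup M star =>
          ∃ g : FundamentalGroup M star, z = g * y * ((⇑ρ)^[k] g)⁻¹)) := by
  let component : (Fin k → Path star (f star)) → ZerothHomotopy (hoP f k) :=
    fun L => ⟦hoP.ofPaths L⟧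
  let φ : Monoid.End (FundamentalGroup M star) := ρ
  let twistedClass : (Fin k → Path star (f star)) → Quotient (twistedConj (φ ^ k)) :=
    fun L => ⟦twistedProd φ fun i => diffLoop α (L i)⟧
  have hcomponent : Function.Surjective component := by
    rintro ⟨lam⟩
    obtain ⟨L, hL⟩ := hoP.exists_joined_ofPaths hf star lam
    exact ⟨L, Quotient.sound hL.symm⟩
  have htwisted : Function.Surjective twistedClass :=
    Quotient.mk_surjective.comp <|
      (twistedProd_surjective φ k).comp (diffLoop_surjective α).comp_left
  have hker (L L') : component L = component L' ↔ twistedClass L = twistedClass L' :=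
    Quotient.eq.trans <| (hoP.joined_ofPaths_iff_twistedConj hf α ρ hρ L L').trans <|
      (twistedConj_cyclicShift_iff φ _ _).trans Quotient.eq.symm
  exact nonempty_equiv_of_surjective_of_eq_iff_eq hcomponent htwisted hker
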